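/- arXiv:2502.00867 — 2 statements merged into one kernel-verified Lean document; each statement's English description precedes it below -/
import Mathlib

section
/- Let D be a connected Eulerian digraph that is not a single directed cycle. For a partition a = {A₁, …, A_k} of E(D), let F(a) = (−1)^k ∏_{i=1}^k |𝔠(A_i)|, where |𝔠(A)| is the number of Eulerian circuits of the subdigraph with edge set A (zero unless A induces a connected Eulerian digraph). Then ∑_{a ∈ Π(E(D))} F(a) = 0, where the sum is over all partitions of E(D). -/
/-- `l` is a nonempty closed directed trail in the digraph with edge type `E` and
endpoint maps `src`, `tgt`: the edges are distinct and consecutive (cyclically). -/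
def IsClosedTrail {V E : Type*} (src tgt : E → V) (l : List E) : Prop :=
  l ≠ [] ∧ l.Nodup ∧ List.Chain' (fun e f => tgt e = src f) l ∧
  ∀ h : l ≠ [], tgt (l.getLast h) = src (l.head h)

/-- `l` is an Eulerian closed trail of the subdigraph with edge set `A`. -/
def IsEulerianOn {V E : Type*} (src tgt : E → V) (A : Set E) (l : List E) : Prop :=
  IsClosedTrail src tgt l ∧ ∀ e, e ∈ l ↔ e ∈ A

/-- The edge set `A` is the edge set of a (connected) Eulerian subdigraph. -/
def IsEulerianSet {V E : Type*} (src tgt : E → V) (A : Set E) : Prop :=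
  ∃ l, IsEulerianOn src tgt A l

/-- The number of Eulerian circuits of the subdigraph with edge set `A`: Eulerian closed
trails up to cyclic rotation of the edges. -/
noncomputable def numEC {V E : Type*} (src tgt : E → V) (A : Set E) : ℕ :=
  Nat.card (Quot fun l₁ l₂ : {l : List E // IsEulerianOn src tgt A l} =>
    ∃ m, (l₂ : List E) = (l₁ : List E).rotate m)

/-- The edge set `A` is the edge set of a directed cycle (an Eulerian closed trail with
no repeated vertices). -/
def IsCycleSet {V E : Type*} (src tgt : E → V) (A : Set E) : Prop :=
  ∃ l, IsEulerianOn src tgt A l ∧ (l.map src).Nodup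

/-- The partition (setoid) `s` of the edge set partitions it into blocks each of which is
the edge set of a connected Eulerian subdigraph; these are the elements of `T(D)`. -/
def EulerianPartition {V E : Type*} (src tgt : E → V) (s : Setoid E) : Prop :=
  ∀ x : E, IsEulerianSet src tgt {y | s.r x y}

open Equiv.Perm Function in
/-- The parity of a permutation is governed by the number of its orbits. -/
theorem Equiv.Perm.neg_one_pow_card_sameCycle_quotient {E : Type*} [Fintype E] [DecidableEq E]
    (σ : Equiv.Perm E) :
    (-1 : ℤ) ^ Nat.card (Quotient (SameCycle.setoid σ)) =
      (-1) ^ Fintype.card E * (sign σ : ℤ) := by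
  let F : E → σ.cycleFactorsFinset ⊕ fixedPoints σ := fun x =>
    if h : σ x = x then .inr ⟨x, h⟩
    else .inl ⟨σ.cycleOf x, cycleOf_mem_cycleFactorsFinset_iff.2 (mem_support.2 h)⟩
  have hF : ∀ x y, F x = F y ↔ SameCycle σ x y := by
    intro x y
    by_cases hx : σ x = x
    · have key : SameCycle σ x y ↔ x = y :=
        ⟨fun h => h.eq_of_left hx, fun h => h ▸ SameCycle.refl _ _⟩
      by_cases hy : σ y = y
      · simp only [F, hx, hy, key, dite_true, Sum.inr.injEq]
        exact Subtype.mk_eq_mk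
      · simp only [F, hx, hy, key, dite_true, dite_false, reduceCtorEq, false_iff]
        rintro rfl
        exact hy hx
    · by_cases hy : σ y = y
      · simp only [F, hx, hy, dite_true, dite_false, reduceCtorEq, false_iff]
        intro h
        exact hx ((h.symm.eq_of_left hy) ▸ hy)
      · simp only [F, hx, hy, dite_false, Sum.inl.injEq, Subtype.mk.injEq]
        exact (sameCycle_iff_cycleOf_eq_of_mem_support (mem_support.2 hx) (mem_support.2 hy)).symm
  let G : Quotient (SameCycle.setoid σ) → σ.cycleFactorsFinset ⊕ fixedPoints σ :=
    Quotient.lift F fun x y h => (hF x y).2 h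
  have hG : Bijective G := by
    constructor
    · intro p q
      induction p using Quotient.inductionOn
      induction q using Quotient.inductionOn
      exact fun h => Quotient.sound ((hF _ _).1 h)
    · rintro (⟨c, hc⟩ | ⟨x, hx⟩)
      · obtain ⟨x, hx⟩ := (mem_cycleFactorsFinset_iff.1 hc).1.nonempty_support
        have hxs := mem_cycleFactorsFinset_support_le hc hx
        refine ⟨Quotient.mk _ x, ?_⟩
        have := mem_support.1 hxs
        simp [G, F, this, cycle_is_cycleOf hx hc]
      · refine ⟨Quotient.mk _ x, ?_⟩
        have : σ x = x := hx
        simp [G, F, this]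
  have hcard : Nat.card (Quotient (SameCycle.setoid σ)) =
      Multiset.card σ.cycleType + Fintype.card (fixedPoints σ) := by
    rw [Nat.card_congr (Equiv.ofBijective G hG), Nat.card_sum]
    simp [cycleType_def]
  have hsum : Fintype.card E = σ.cycleType.sum + Fintype.card (fixedPoints σ) := by
    have := card_fixedPoints σ
    have := sum_cycleType_le σ
    omega
  rw [hcard, hsum, sign_of_cycleType]
  push_cast
  rw [pow_add, pow_add, pow_add]
  have : ((-1 : ℤ) ^ σ.cycleType.sum) * (-1) ^ σ.cycleType.sum = 1 := by
    rw [← mul_pow]; simp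
  linear_combination (-(-1 : ℤ) ^ Multiset.card σ.cycleType *
    (-1) ^ Fintype.card (fixedPoints σ)) * this

namespace Equiv.Perm

variable {E : Type*} (σ : Equiv.Perm E) (x : E)

/-- The orbit of `x` under `σ`, listed from `x`; unlike `Equiv.Perm.toList`, it is `[x]` when
`x` is a fixed point. -/
noncomputable def orbitList : List E :=
  (List.range (Function.minimalPeriod σ x)).map fun n => σ^[n] x

variable {σ x}

theorem nodup_orbitList : (σ.orbitList x).Nodup :=
  Function.nodup_periodicOrbit

theorem mem_orbitList [Finite E] {y : E} : y ∈ σ.orbitList x ↔ SameCycle σ x y := by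
  have hx : x ∈ Function.periodicPts σ := σ.injective.mem_periodicPts x
  refine (Function.mem_periodicOrbit_iff hx).trans ⟨?_, fun h => ?_⟩
  · rintro ⟨n, rfl⟩
    exact ⟨n, by simp [iterate_eq_pow]⟩
  · obtain ⟨n, hn⟩ := h.exists_nat_pow_eq
    exact ⟨n, by rw [iterate_eq_pow, hn]⟩

theorem formPerm_orbitList [DecidableEq E] {y : E} (hy : y ∈ σ.orbitList x) :
    (σ.orbitList x).formPerm y = σ y := by
  obtain ⟨i, hi, rfl⟩ := List.getElem_of_mem hy
  rw [List.formPerm_apply_getElem _ nodup_orbitList]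
  simp [orbitList, Function.iterate_mod_minimalPeriod_eq, Function.iterate_succ_apply']

theorem isClosedTrail_orbitList [Finite E] {V : Type*} {src tgt : E → V}
    (h : ∀ e, tgt e = src (σ e)) : IsClosedTrail src tgt (σ.orbitList x) := by
  have hx : x ∈ Function.periodicPts σ := σ.injective.mem_periodicPts x
  have hpos := Function.minimalPeriod_pos_of_mem_periodicPts hx
  refine ⟨List.ne_nil_of_mem (mem_orbitList.2 (SameCycle.refl σ x)), nodup_orbitList, ?_, ?_⟩
  · refine List.isChain_iff_getElem.2 fun i hi => ?_
    simp [orbitList, h, Function.iterate_succ_apply']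
  · intro hne
    rw [h, List.getLast_eq_getElem, List.head_eq_getElem]
    have : σ (σ^[Function.minimalPeriod σ x - 1] x) = x := by
      rw [← Function.iterate_succ_apply' σ, Nat.succ_eq_add_one, Nat.sub_add_cancel hpos,
        Function.iterate_minimalPeriod]
    simp [orbitList, this]

end Equiv.Perm

theorem IsClosedTrail.tgt_eq_src_formPerm {V E : Type*} [DecidableEq E] {src tgt : E → V}
    {l : List E} (h : IsClosedTrail src tgt l) {e : E} (he : e ∈ l) :
    tgt e = src (l.formPerm e) := by
  obtain ⟨hne, hnd, hch, hcl⟩ := h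
  obtain ⟨i, hi, rfl⟩ := List.getElem_of_mem he
  rw [List.formPerm_apply_getElem _ hnd]
  rcases Nat.lt_or_ge (i + 1) l.length with hlt | hge
  · simp only [Nat.mod_eq_of_lt hlt]
    exact List.isChain_iff_getElem.1 hch i hlt
  · have hil : i = l.length - 1 := by omega
    have := hcl hne
    rw [List.getLast_eq_getElem, List.head_eq_getElem] at this
    have h0 : (i + 1) % l.length = 0 := by
      rw [show i + 1 = l.length by omega, Nat.mod_self]
    simp only [h0]
    simpa [hil] using this

theorem List.formPerm_eq_iff_exists_rotate {E : Type*} [DecidableEq E] {l l' : List E}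
    (hl : l.Nodup) (hl' : l'.Nodup) (hmem : ∀ e, e ∈ l ↔ e ∈ l') :
    l.formPerm = l'.formPerm ↔ ∃ m, l' = l.rotate m := by
  constructor
  · intro h
    rcases (List.formPerm_eq_formPerm_iff hl hl').1 h with ⟨m, hm⟩ | ⟨h1, -⟩
    · exact ⟨m, hm.symm⟩
    · have hp : l.Perm l' := (List.perm_ext_iff_of_nodup hl hl').2 hmem
      refine ⟨0, ?_⟩
      rw [List.rotate_zero]
      match l, h1 with
      | [], _ => exact hp.nil_eq.symm
      | [a], _ => exact (List.singleton_perm.1 hp).symm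
  · rintro ⟨m, rfl⟩
    exact (List.formPerm_rotate l hl m).symm

section Glue

theorem mk_formPerm_apply {E : Type*} [DecidableEq E] {a : Setoid E} (L : Quotient a → List E)
    (hL : ∀ q e, e ∈ L q ↔ Quotient.mk a e = q) (e : E) :
    Quotient.mk a ((L (Quotient.mk a e)).formPerm e) = Quotient.mk a e :=
  (hL _ _).1 (List.formPerm_apply_mem_of_mem ((hL _ e).2 rfl))

variable {E : Type*} [Finite E] [DecidableEq E] {a : Setoid E} (L : Quotient a → List E)
  (hL : ∀ q e, e ∈ L q ↔ Quotient.mk a e = q)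

/-- The permutation acting on each block of `a` as the cyclic permutation given by a list of
the elements of that block. -/
noncomputable def glueCycles : Equiv.Perm E :=
  Equiv.ofBijective (fun e => (L (Quotient.mk a e)).formPerm e) <| by
    refine Finite.injective_iff_bijective.1 fun e f h => ?_
    have hq : Quotient.mk a e = Quotient.mk a f := by
      rw [← mk_formPerm_apply L hL e, ← mk_formPerm_apply L hL f]
      exact congrArg _ h
    simp only [hq] at h
    exact (L (Quotient.mk a f)).formPerm.injective h

theorem glueCycles_apply (e : E) :
    glueCycles L hL e = (L (Quotient.mk a e)).formPerm e := rfl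

theorem glueCycles_pow_apply (n : ℕ) (e : E) :
    (glueCycles L hL ^ n) e = ((L (Quotient.mk a e)).formPerm ^ n) e ∧
      Quotient.mk a ((glueCycles L hL ^ n) e) = Quotient.mk a e := by
  induction n with
  | zero => simp
  | succ n ih =>
    have h := glueCycles_apply L hL ((glueCycles L hL ^ n) e)
    have hq := mk_formPerm_apply L hL ((glueCycles L hL ^ n) e)
    rw [← h] at hq
    rw [ih.2] at h hq
    rw [pow_succ', pow_succ', Equiv.Perm.mul_apply, Equiv.Perm.mul_apply, ← ih.1]
    exact ⟨h, hq⟩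

theorem sameCycle_setoid_glueCycles (hnd : ∀ q, (L q).Nodup) :
    Equiv.Perm.SameCycle.setoid (glueCycles L hL) = a := by
  refine Setoid.ext fun x y => ?_
  rw [← @Quotient.eq _ a]
  constructor
  · intro h
    obtain ⟨n, rfl⟩ := Equiv.Perm.SameCycle.exists_nat_pow_eq h
    exact (glueCycles_pow_apply L hL n x).2.symm
  · intro h
    obtain ⟨i, hi, hxi⟩ := List.getElem_of_mem ((hL (Quotient.mk a x) x).2 rfl)
    obtain ⟨j, hj, hyj⟩ := List.getElem_of_mem ((hL (Quotient.mk a x) y).2 h.symm)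
    refine ⟨((L (Quotient.mk a x)).length - i + j : ℕ), ?_⟩
    rw [zpow_natCast, (glueCycles_pow_apply L hL _ x).1]
    conv_lhs => enter [2]; rw [← hxi]
    rw [List.formPerm_pow_apply_getElem _ (hnd _), ← hyj]
    congr 1
    rw [show i + ((L (Quotient.mk a x)).length - i + j) = (L (Quotient.mk a x)).length + j by
      omega, Nat.add_mod_left, Nat.mod_eq_of_lt hj]

end Glue

/-- Choosing an Eulerian circuit in every block of a partition `a` amounts to choosing a
permutation of the edges, compatible with the endpoint maps, whose orbits are the blocks. -/
theorem finprod_numEC {V E : Type*} [Finite E] (src tgt : E → V) (a : Setoid E) :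
    (∏ᶠ q : Quotient a, (numEC src tgt {e | Quotient.mk a e = q} : ℤ)) =
      Nat.card {σ : Equiv.Perm E //
        (∀ e, tgt e = src (σ e)) ∧ Equiv.Perm.SameCycle.setoid σ = a} := by
  classical
  have := Fintype.ofFinite (Quotient a)
  rw [finprod_eq_prod_of_fintype]
  simp only [numEC]
  rw [← Nat.cast_prod, ← Nat.card_pi]
  congr 1
  let R := fun q : Quotient a =>
    fun l₁ l₂ : {l : List E // IsEulerianOn src tgt {e | Quotient.mk a e = q} l} =>
      ∃ m, (l₂ : List E) = (l₁ : List E).rotate m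
  let L : (∀ q, Quot (R q)) → Quotient a → List E := fun c q => (c q).out.1
  have hE : ∀ c q, IsEulerianOn src tgt {e | Quotient.mk a e = q} (L c q) :=
    fun c q => (c q).out.2
  have hL : ∀ c q e, e ∈ L c q ↔ Quotient.mk a e = q := fun c q e => (hE c q).2 e
  have hR : ∀ q (l₁ l₂ : {l : List E // IsEulerianOn src tgt {e | Quotient.mk a e = q} l}),
      Quot.mk (R q) l₁ = Quot.mk (R q) l₂ ↔ l₁.1.formPerm = l₂.1.formPerm := by
    intro q l₁ l₂
    have key : ∀ l₁ l₂ : {l : List E // IsEulerianOn src tgt {e | Quotient.mk a e = q} l},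
        l₁.1.formPerm = l₂.1.formPerm ↔ R q l₁ l₂ := fun l₁ l₂ =>
      List.formPerm_eq_iff_exists_rotate l₁.2.1.2.1 l₂.2.1.2.1
        fun e => (l₁.2.2 e).trans (l₂.2.2 e).symm
    exact ⟨congrArg (Quot.lift (fun l => l.1.formPerm) fun l₁ l₂ => (key l₁ l₂).2),
      fun h => Quot.sound ((key _ _).1 h)⟩
  refine Nat.card_congr (Equiv.ofBijective (fun c => ⟨glueCycles (L c) (hL c), fun e => ?_,
    sameCycle_setoid_glueCycles _ _ fun q => (hE c q).1.2.1⟩) ⟨fun c d h => ?_, ?_⟩)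
  · exact (hE c _).1.tgt_eq_src_formPerm ((hL c _ e).2 rfl)
  · funext q
    rw [← Quot.out_eq (c q), ← Quot.out_eq (d q)]
    refine (hR q _ _).2 (Equiv.ext fun e => ?_)
    change (L c q).formPerm e = (L d q).formPerm e
    by_cases he : Quotient.mk a e = q
    · subst he
      exact Equiv.congr_fun (congrArg Subtype.val h) e
    · rw [List.formPerm_apply_of_notMem (mt (hL c q e).1 he),
        List.formPerm_apply_of_notMem (mt (hL d q e).1 he)]
  · rintro ⟨σ, hσ, rfl⟩
    have hmem : ∀ (q : Quotient (Equiv.Perm.SameCycle.setoid σ)) e,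
        e ∈ σ.orbitList q.out ↔ Quotient.mk _ e = q := by
      intro q e
      rw [Equiv.Perm.mem_orbitList]
      exact ⟨fun h => (Quotient.sound (s := Equiv.Perm.SameCycle.setoid σ) h).symm.trans q.out_eq,
        fun h => Quotient.exact (s := Equiv.Perm.SameCycle.setoid σ) (q.out_eq.trans h.symm)⟩
    let c : ∀ q, Quot (R q) := fun q =>
      Quot.mk _ ⟨σ.orbitList q.out, Equiv.Perm.isClosedTrail_orbitList hσ, hmem q⟩
    refine ⟨c, Subtype.ext (Equiv.ext fun e => ?_)⟩
    have h := (hR _ _ _).1 (Quot.out_eq (c (Quotient.mk _ e)))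
    exact (Equiv.congr_fun h e).trans (Equiv.Perm.formPerm_orbitList ((hmem _ e).2 rfl))

/-- If two distinct edges leave the same vertex, then as many even as odd permutations of the
edges are compatible with the endpoint maps. -/
theorem sum_sign_compatible_eq_zero {V E : Type*} [Fintype E] [DecidableEq E] [DecidableEq V]
    {src tgt : E → V} {f g : E} (hfg : f ≠ g) (hs : src f = src g) :
    ∑ σ : Equiv.Perm E with ∀ e, tgt e = src (σ e), (Equiv.Perm.sign σ : ℤ) = 0 := by
  refine Finset.sum_involution (fun σ _ => Equiv.swap f g * σ) ?_ ?_ ?_ ?_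
  · intro σ _
    simp [Equiv.Perm.sign_swap hfg]
  · intro σ _ _ h
    exact hfg (Equiv.swap_eq_one_iff.1 (mul_eq_right.1 h))
  · intro σ hσ
    simp only [Finset.mem_filter, Finset.mem_univ, true_and] at hσ ⊢
    intro e
    rw [hσ e, Equiv.Perm.mul_apply, Equiv.swap_apply_def]
    split_ifs with h1 h2
    · rw [h1, hs]
    · rw [h2, hs]
    · rfl
  · intro σ _
    simp

/-- For a connected Eulerian digraph `D` that is not a single directed cycle, the sum of
`F(a) = (−1)^{|a|} ∏_{blocks A of a} |𝔠(A)|` over all partitions `a` of `E(D)` is zero,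
where `|𝔠(A)|` is the number of Eulerian circuits of the subdigraph with edge set `A`
(zero unless `A` is the edge set of a connected Eulerian subdigraph). -/
theorem sum_F_eq_zero {V E : Type*} [Fintype V] [Fintype E]
    (src tgt : E → V) (hD : IsEulerianSet src tgt Set.univ)
    (hnc : ¬ IsCycleSet src tgt Set.univ) :
    (∑ᶠ a : Setoid E, (-1 : ℤ) ^ Nat.card (Quotient a) *
        ∏ᶠ q : Quotient a, (numEC src tgt {e | Quotient.mk a e = q} : ℤ)) = 0 := by
  classical
  obtain ⟨l, hl⟩ := hD
  obtain ⟨f, g, hfg, hs⟩ : ∃ f g, f ≠ g ∧ src f = src g := by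
    by_contra! h
    exact hnc ⟨l, hl, hl.1.2.1.map fun f g hs => by_contra fun hfg => h f g hfg hs⟩
  have : Finite (Setoid E) :=
    Finite.of_injective (fun s : Setoid E => s.r) fun s t h => Setoid.ext fun x y =>
      iff_of_eq (congrFun₂ h x y)
  have := Fintype.ofFinite (Setoid E)
  rw [finsum_eq_sum_of_fintype]
  calc
    _ = ∑ a : Setoid E, ∑ σ ∈ Finset.univ.filter (fun σ : Equiv.Perm E =>
          ∀ e, tgt e = src (σ e)) with Equiv.Perm.SameCycle.setoid σ = a,
          (-1) ^ Fintype.card E * (Equiv.Perm.sign σ : ℤ) := by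
      refine Finset.sum_congr rfl fun a _ => ?_
      rw [finprod_numEC, Finset.filter_filter, mul_comm,
        Nat.card_eq_fintype_card (α := {σ : Equiv.Perm E // _}), Fintype.card_subtype,
        ← nsmul_eq_mul]
      refine (Finset.sum_eq_card_nsmul fun σ hσ => ?_).symm
      obtain ⟨-, -, rfl⟩ := Finset.mem_filter.1 hσ
      exact (Equiv.Perm.neg_one_pow_card_sameCycle_quotient σ).symm
    _ = ∑ σ : Equiv.Perm E with ∀ e, tgt e = src (σ e),
          (-1) ^ Fintype.card E * (Equiv.Perm.sign σ : ℤ) := by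
      have key := Finset.sum_fiberwise (Finset.univ.filter fun σ : Equiv.Perm E =>
        ∀ e, tgt e = src (σ e)) Equiv.Perm.SameCycle.setoid fun σ =>
          (-1) ^ Fintype.card E * (Equiv.Perm.sign σ : ℤ)
      convert key
    _ = 0 := by
      rw [← Finset.mul_sum, sum_sign_compatible_eq_zero hfg hs, mul_zero]
end

section
/- Let D be a connected Eulerian digraph. Then the Martin polynomial satisfies s_D(1 − t) = − ∑_{a ∈ Q(D)} (−1)^{|a|} χ_{L(a)}(t), where Q(D) is the set of partitions of E(D) into directed cycles, |a| is the number of cycles in a, and χ_{L(a)} is the characteristic polynomial of the bond lattice of the intersection graph of the cycles of a. Equivalently, for the circuit partition polynomial, r_D(−t) = ∑_{a ∈ Q(D)} (−1)^{|a|} P_{G_a}(t), where P_{G_a} is the chromatic polynomial of the intersection graph G_a. -/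
/-- `f_k(D)`: the number of partitions of Eulerian circuits of `D` into `k` circuits,
computed as the sum over partitions of `E(D)` into `k` connected Eulerian blocks of the
product of the numbers of Eulerian circuits of the blocks. -/
noncomputable def fk {V E : Type*} [Fintype E] (src tgt : E → V) (k : ℕ) : ℕ :=
  ∑ᶠ a ∈ {a : Setoid E | EulerianPartition src tgt a ∧ Nat.card (Quotient a) = k},
    ∏ᶠ q : Quotient a, numEC src tgt {e | Quotient.mk a e = q}

/-- Adjacency in the intersection graph `G_a` of a partition `a` of the edge set into
cycles: two distinct cycles are adjacent iff they share a vertex of `D`. -/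
def InterAdj {V E : Type*} (src tgt : E → V) (a : Setoid E)
    (q₁ q₂ : Quotient a) : Prop :=
  q₁ ≠ q₂ ∧ ∃ e f : E, Quotient.mk a e = q₁ ∧ Quotient.mk a f = q₂ ∧
    ({src e, tgt e} ∩ {src f, tgt f} : Set V).Nonempty

/-- The number of proper colorings of the intersection graph `G_a` with `n` colors,
i.e. the value `P_{G_a}(n)` of its chromatic polynomial. -/
noncomputable def numProperColorings {V E : Type*} (src tgt : E → V)
    (a : Setoid E) (n : ℕ) : ℕ :=
  Nat.card {c : Quotient a → Fin n //
    ∀ q₁ q₂, InterAdj src tgt a q₁ q₂ → c q₁ ≠ c q₂}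

open scoped Classical in
theorem Equiv.Perm.neg_one_pow_card_quotient_sameCycle {E : Type*} [Fintype E]
    (σ : Equiv.Perm E) :
    (-1 : ℤ) ^ Nat.card (Quotient (SameCycle.setoid σ)) =
      (-1) ^ Fintype.card E * (sign σ : ℤ) := by
  let g : E → Equiv.Perm E ⊕ E := fun x => if σ x = x then .inr x else .inl (σ.cycleOf x)
  have hg : SameCycle.setoid σ = Setoid.ker g := by
    ext x y
    change SameCycle σ x y ↔ g x = g y
    by_cases hx : σ x = x <;> by_cases hy : σ y = y <;> simp only [g, hx, hy, if_true, if_false]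
    · rw [Sum.inr.injEq]
      exact ⟨fun h => h.eq_of_left hx, by rintro rfl; rfl⟩
    · simp only [reduceCtorEq, iff_false]
      intro h
      exact hy (h.apply_eq_self_iff.1 hx)
    · simp only [reduceCtorEq, iff_false]
      intro h
      exact hx (h.apply_eq_self_iff.2 hy)
    · rw [Sum.inl.injEq]
      refine ⟨fun h => h.cycleOf_eq, fun h => ?_⟩
      have : (σ.cycleOf x) y ≠ y := by rw [h, cycleOf_apply_self]; exact hy
      by_contra hn
      exact this (cycleOf_apply_of_not_sameCycle hn)
  have himg : Finset.univ.image g =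
      σ.cycleFactorsFinset.disjSum (Finset.univ.filter fun x => σ x = x) := by
    ext (c | x)
    · simp only [Finset.mem_image, Finset.mem_univ, true_and, Finset.inl_mem_disjSum, g]
      constructor
      · rintro ⟨x, hx⟩
        split_ifs at hx with h
        rw [← Sum.inl.inj hx, cycleOf_mem_cycleFactorsFinset_iff]
        exact mem_support.2 h
      · intro hc
        obtain ⟨x, hx⟩ := (mem_cycleFactorsFinset_iff.1 hc).1.nonempty_support
        refine ⟨x, ?_⟩
        rw [if_neg (mem_support.1 (mem_cycleFactorsFinset_support_le hc hx)),
          cycle_is_cycleOf hx hc]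
    · simp only [Finset.mem_image, Finset.mem_univ, true_and, Finset.inr_mem_disjSum, g,
        Finset.mem_filter]
      constructor
      · rintro ⟨y, hy⟩
        split_ifs at hy with h
        rwa [← Sum.inr.inj hy]
      · exact fun h => ⟨x, by rw [if_pos h]⟩
  have hcard : Nat.card (Quotient (SameCycle.setoid σ)) =
      Multiset.card σ.cycleType + (Finset.univ.filter fun x => σ x = x).card := by
    rw [hg, Nat.card_congr (Setoid.quotientKerEquivRange g), cycleType_def, Multiset.card_map,
      Finset.card_val, ← Finset.card_disjSum, ← himg, ← Set.ncard_coe_finset, Finset.coe_image,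
      Finset.coe_univ, Set.image_univ]
    rfl
  have hfix : Fintype.card E =
      σ.cycleType.sum + (Finset.univ.filter fun x => σ x = x).card := by
    rw [sum_cycleType, support, add_comm]
    exact (Finset.card_filter_add_card_filter_not _).symm
  rw [hcard, hfix, sign_of_cycleType]
  push_cast
  rw [← pow_add, neg_one_pow_congr]
  grind

/-- The transition systems of a digraph: permutations of the edges which send each edge to an edge
leaving its target. -/
def IsTransition {V E : Type*} (src tgt : E → V) (σ : Equiv.Perm E) : Prop :=
  ∀ e, src (σ e) = tgt e

/-- `τ` permutes the edges in `A` cyclically along a trail, and fixes the others. -/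
def IsCircuitPerm {V E : Type*} (src tgt : E → V) (A : Set E) (τ : Equiv.Perm E) : Prop :=
  (∀ e ∉ A, τ e = e) ∧ (∀ e ∈ A, src (τ e) = tgt e) ∧
    ∀ x ∈ A, ∀ y, τ.SameCycle x y ↔ y ∈ A

open scoped Classical in
theorem isClosedTrail_iff_formPerm {V E : Type*} (src tgt : E → V) (l : List E) :
    IsClosedTrail src tgt l ↔
      l ≠ [] ∧ l.Nodup ∧ ∀ e ∈ l, src (l.formPerm e) = tgt e := by
  unfold IsClosedTrail
  refine and_congr_right fun hne => and_congr_right fun hnd => ?_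
  have hpos := List.length_pos_iff.2 hne
  constructor
  · rintro ⟨hc, hl⟩ e he
    obtain ⟨i, hi, rfl⟩ := List.getElem_of_mem he
    rw [List.formPerm_apply_getElem l hnd i hi]
    by_cases h : i + 1 < l.length
    · simp only [Nat.mod_eq_of_lt h]
      exact (List.isChain_iff_getElem.1 hc i h).symm
    · have h1 : i + 1 = l.length := by omega
      have h2 : i = l.length - 1 := by omega
      have := hl hne
      rw [List.getLast_eq_getElem, List.head_eq_getElem] at this
      simp only [h1, Nat.mod_self]
      simp only [h2]
      exact this.symm
  · intro h
    constructor
    · refine List.isChain_iff_getElem.2 fun i hi => ?_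
      have := h l[i] (List.getElem_mem _)
      rw [List.formPerm_apply_getElem l hnd i (by omega)] at this
      simp only [Nat.mod_eq_of_lt hi] at this
      exact this.symm
    · intro _
      have := h (l[l.length - 1]) (List.getElem_mem _)
      rw [List.formPerm_apply_getElem l hnd _ (by omega)] at this
      rw [List.getLast_eq_getElem, List.head_eq_getElem]
      simp only [Nat.sub_add_cancel hpos, Nat.mod_self] at this
      exact this.symm

open scoped Classical in
theorem IsEulerianOn.isCircuitPerm_formPerm {V E : Type*} {src tgt : E → V} {A : Set E}
    {l : List E} (h : IsEulerianOn src tgt A l) : IsCircuitPerm src tgt A l.formPerm := by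
  obtain ⟨ht, hm⟩ := h
  obtain ⟨hne, hnd, hs⟩ := (isClosedTrail_iff_formPerm src tgt l).1 ht
  refine ⟨fun e he => List.formPerm_apply_of_notMem (mt (hm e).1 he),
    fun e he => hs e ((hm e).2 he), fun x hx y => ?_⟩
  constructor
  · intro hxy
    by_contra hy
    have hfix : l.formPerm y = y := List.formPerm_apply_of_notMem (mt (hm y).1 hy)
    rw [hxy.symm.eq_of_left hfix] at hy
    exact hy hx
  · intro hy
    obtain ⟨i, hi, rfl⟩ := List.getElem_of_mem ((hm x).2 hx)
    obtain ⟨j, hj, rfl⟩ := List.getElem_of_mem ((hm y).2 hy)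
    refine ⟨((l.length - i + j : ℕ) : ℤ), ?_⟩
    rw [zpow_natCast, List.formPerm_pow_apply_getElem l hnd _ i hi]
    have : (i + (l.length - i + j)) % l.length = j := by
      rw [show i + (l.length - i + j) = j + l.length by omega, Nat.add_mod_right,
        Nat.mod_eq_of_lt hj]
    simp only [this]

open scoped Classical in
theorem IsCircuitPerm.exists_isEulerianOn {V E : Type*} [Fintype E] {src tgt : E → V} {A : Set E}
    (hA : A.Nonempty) {τ : Equiv.Perm E} (h : IsCircuitPerm src tgt A τ) :
    ∃ l, IsEulerianOn src tgt A l ∧ l.formPerm = τ := by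
  obtain ⟨x, hx⟩ := hA
  obtain ⟨hfix, hs, hcyc⟩ := h
  suffices ∃ l : List E, l.Nodup ∧ (∀ e, e ∈ l ↔ e ∈ A) ∧ l.formPerm = τ by
    obtain ⟨l, hnd, hm, hl⟩ := this
    refine ⟨l, ⟨(isClosedTrail_iff_formPerm src tgt l).2
      ⟨List.ne_nil_of_mem ((hm x).2 hx), hnd, fun e he => ?_⟩, hm⟩, hl⟩
    rw [hl]
    exact hs e ((hm e).1 he)
  by_cases hτ : τ x = x
  · have hAx : ∀ e, e ∈ A ↔ e = x := fun e => by
      rw [← hcyc x hx e, eq_comm]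
      exact ⟨fun h => h.eq_of_left hτ, by rintro rfl; rfl⟩
    refine ⟨[x], List.nodup_singleton x, fun e => by simp [hAx], ?_⟩
    ext e
    rw [List.formPerm_singleton, Equiv.Perm.one_apply]
    by_cases he : e = x
    · rw [he, hτ]
    · rw [hfix e (mt (hAx e).1 he)]
  · refine ⟨τ.toList x, Equiv.Perm.nodup_toList τ x, fun e => ?_, ?_⟩
    · rw [Equiv.Perm.mem_toList_iff, hcyc x hx]
      exact and_iff_left (Equiv.Perm.mem_support.2 hτ)
    · rw [Equiv.Perm.formPerm_toList]
      ext e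
      by_cases he : τ.SameCycle x e
      · rw [he.cycleOf_apply]
      · rw [Equiv.Perm.cycleOf_apply_of_not_sameCycle he, hfix e (mt (hcyc x hx e).2 he)]

theorem numEC_eq_card_isCircuitPerm {V E : Type*} [Fintype E] (src tgt : E → V) {A : Set E}
    (hA : A.Nonempty) :
    numEC src tgt A = Nat.card {τ : Equiv.Perm E // IsCircuitPerm src tgt A τ} := by
  classical
  refine Nat.card_eq_of_bijective (Quot.lift
    (fun l => ⟨l.1.formPerm, l.2.isCircuitPerm_formPerm⟩) ?_) ⟨?_, ?_⟩
  · rintro l₁ l₂ ⟨m, hm⟩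
    exact Subtype.ext ((congrArg List.formPerm hm).trans (List.formPerm_rotate _ l₁.2.1.2.1 m)).symm
  · rintro ⟨l₁⟩ ⟨l₂⟩ h
    refine Quot.sound ?_
    rcases (List.formPerm_eq_formPerm_iff l₁.2.1.2.1 l₂.2.1.2.1).1 (Subtype.ext_iff.1 h) with
      ⟨m, hm⟩ | ⟨h₁, h₂⟩
    · exact ⟨m, hm.symm⟩
    · obtain ⟨x, hx⟩ := hA
      have aux : ∀ l : {l : List E // IsEulerianOn src tgt A l}, l.1.length ≤ 1 → l.1 = [x] := by
        intro l hl
        obtain ⟨y, hy⟩ := List.length_eq_one_iff.1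
          (le_antisymm hl (List.length_pos_iff.2 l.2.1.1))
        have := (l.2.2 x).2 hx
        rw [hy, List.mem_singleton] at this
        rw [hy, this]
      exact ⟨0, by rw [aux l₁ h₁, aux l₂ h₂, List.rotate_zero]⟩
  · rintro ⟨τ, hτ⟩
    obtain ⟨l, hl, rfl⟩ := hτ.exists_isEulerianOn hA
    exact ⟨Quot.mk _ ⟨l, hl⟩, rfl⟩

theorem Equiv.Perm.sameCycle_congr_of_eqOn {E : Type*} [Finite E] {σ τ : Equiv.Perm E} {A : Set E}
    (hA : Set.MapsTo σ A A) (h : Set.EqOn τ σ A) {x : E} (hx : x ∈ A) (y : E) :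
    τ.SameCycle x y ↔ σ.SameCycle x y := by
  have key : ∀ n : ℕ, (τ ^ n) x = (σ ^ n) x ∧ (σ ^ n) x ∈ A := by
    intro n
    induction n with
    | zero => exact ⟨rfl, hx⟩
    | succ n ih =>
      rw [pow_succ', pow_succ', mul_apply, mul_apply, ih.1]
      exact ⟨h ih.2, hA ih.2⟩
  constructor <;> intro hxy
  · obtain ⟨n, rfl⟩ := hxy.exists_nat_pow_eq
    exact ⟨n, by rw [zpow_natCast, (key n).1]⟩
  · obtain ⟨n, rfl⟩ := hxy.exists_nat_pow_eq
    exact ⟨n, by rw [zpow_natCast, (key n).1]⟩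

section Blocks

variable {V E : Type*} {src tgt : E → V} {a : Setoid E}

theorem mk_apply_eq {σ : Equiv.Perm E} (hσ : Equiv.Perm.SameCycle.setoid σ = a) (e : E) :
    Quotient.mk a (σ e) = Quotient.mk a e := by
  subst hσ
  exact Quotient.sound (Equiv.Perm.sameCycle_apply_left.2 (Equiv.Perm.SameCycle.refl σ e))

theorem IsCircuitPerm.apply_mem {A : Set E} {τ : Equiv.Perm E} (h : IsCircuitPerm src tgt A τ)
    {e : E} (he : e ∈ A) : τ e ∈ A :=
  (h.2.2 e he _).1 (Equiv.Perm.sameCycle_apply_right.2 (Equiv.Perm.SameCycle.refl τ e))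

theorem IsCircuitPerm.symm_apply_mem {A : Set E} {τ : Equiv.Perm E} (h : IsCircuitPerm src tgt A τ)
    {e : E} (he : e ∈ A) : τ.symm e ∈ A :=
  (h.2.2 e he _).1 (Equiv.Perm.sameCycle_symm_apply_right.2 (Equiv.Perm.SameCycle.refl τ e))

open scoped Classical in
/-- The restriction of a permutation to one of the blocks of its orbit partition, extended by
the identity. -/
noncomputable def restrictBlock (σ : Equiv.Perm E) (hσ : Equiv.Perm.SameCycle.setoid σ = a)
    (q : Quotient a) : Equiv.Perm E :=
  Equiv.Perm.ofSubtype (σ.subtypePerm (p := fun e => Quotient.mk a e = q)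
    fun e => by rw [mk_apply_eq hσ])

theorem restrictBlock_apply {σ : Equiv.Perm E} (hσ : Equiv.Perm.SameCycle.setoid σ = a)
    {q : Quotient a} {e : E} (he : Quotient.mk a e = q) : restrictBlock σ hσ q e = σ e := by
  classical
  rw [restrictBlock, Equiv.Perm.ofSubtype_apply_of_mem (p := fun e => Quotient.mk a e = q) _ he]
  rfl

theorem restrictBlock_apply_of_ne {σ : Equiv.Perm E}
    (hσ : Equiv.Perm.SameCycle.setoid σ = a) {q : Quotient a} {e : E}
    (he : Quotient.mk a e ≠ q) : restrictBlock σ hσ q e = e := by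
  classical
  exact Equiv.Perm.ofSubtype_apply_of_not_mem (p := fun e => Quotient.mk a e = q) _ he

theorem isCircuitPerm_restrictBlock [Finite E] {σ : Equiv.Perm E} (ht : IsTransition src tgt σ)
    (hσ : Equiv.Perm.SameCycle.setoid σ = a) (q : Quotient a) :
    IsCircuitPerm src tgt {e | Quotient.mk a e = q} (restrictBlock σ hσ q) := by
  refine ⟨fun e he => restrictBlock_apply_of_ne hσ he, fun e he => ?_, fun x hx y => ?_⟩
  · rw [restrictBlock_apply hσ he, ht e]
  · rw [Equiv.Perm.sameCycle_congr_of_eqOn (σ := σ)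
      (fun e he => (mk_apply_eq hσ e).trans he) (fun e he => restrictBlock_apply hσ he) hx]
    subst hσ
    rw [← show _ = q from hx, Set.mem_ofPred_eq, Quotient.eq]
    exact Equiv.Perm.sameCycle_comm

/-- The permutation acting on each block of a partition as a given cyclic permutation of the
block. -/
noncomputable def glueBlocks (τ : ∀ q : Quotient a,
    {τ : Equiv.Perm E // IsCircuitPerm src tgt {e | Quotient.mk a e = q} τ}) : Equiv.Perm E where
  toFun e := (τ (Quotient.mk a e)).1 e
  invFun e := (τ (Quotient.mk a e)).1.symm e
  left_inv e := by
    have h := (τ (Quotient.mk a e)).2.apply_mem (e := e) rfl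
    rw [Set.mem_ofPred_eq] at h
    dsimp only
    rw [h, Equiv.symm_apply_apply]
  right_inv e := by
    have h := (τ (Quotient.mk a e)).2.symm_apply_mem (e := e) rfl
    rw [Set.mem_ofPred_eq] at h
    dsimp only
    rw [h, Equiv.apply_symm_apply]

theorem setoid_glueBlocks [Finite E] (τ : ∀ q : Quotient a,
    {τ : Equiv.Perm E // IsCircuitPerm src tgt {e | Quotient.mk a e = q} τ}) :
    Equiv.Perm.SameCycle.setoid (glueBlocks τ) = a := by
  ext x y
  change (glueBlocks τ).SameCycle x y ↔ a x y
  have hq := (τ (Quotient.mk a x)).2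
  rw [Equiv.Perm.sameCycle_congr_of_eqOn (σ := (τ (Quotient.mk a x)).1)
    (A := {e | Quotient.mk a e = Quotient.mk a x}) (fun e he => hq.apply_mem he) ?_ rfl,
    hq.2.2 x rfl, Set.mem_ofPred_eq, Quotient.eq]
  · exact a.comm'
  · intro e he
    rw [Set.mem_ofPred_eq] at he
    change (τ (Quotient.mk a e)).1 e = _
    rw [he]

theorem isTransition_glueBlocks (τ : ∀ q : Quotient a,
    {τ : Equiv.Perm E // IsCircuitPerm src tgt {e | Quotient.mk a e = q} τ}) :
    IsTransition src tgt (glueBlocks τ) :=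
  fun e => (τ (Quotient.mk a e)).2.2.1 e rfl

variable (src tgt a) in
/-- Transition systems with orbit partition `a` are the same as families of cyclic
permutations of the blocks of `a`. -/
noncomputable def transitionEquivPi [Finite E] :
    {σ : Equiv.Perm E // IsTransition src tgt σ ∧ Equiv.Perm.SameCycle.setoid σ = a} ≃
      ∀ q : Quotient a,
        {τ : Equiv.Perm E // IsCircuitPerm src tgt {e | Quotient.mk a e = q} τ} where
  toFun σ q := ⟨restrictBlock σ.1 σ.2.2 q, isCircuitPerm_restrictBlock σ.2.1 σ.2.2 q⟩
  invFun τ := ⟨glueBlocks τ, isTransition_glueBlocks τ, setoid_glueBlocks τ⟩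
  left_inv σ := by
    ext e
    exact restrictBlock_apply σ.2.2 rfl
  right_inv τ := by
    ext q e
    by_cases he : Quotient.mk a e = q
    · subst he
      exact restrictBlock_apply (setoid_glueBlocks τ) rfl
    · exact (restrictBlock_apply_of_ne (setoid_glueBlocks τ) he).trans ((τ q).2.1 e he).symm

variable (src tgt a) in
theorem finprod_numEC_eq_card_isTransition [Fintype E] :
    ∏ᶠ q : Quotient a, numEC src tgt {e | Quotient.mk a e = q} =
      Nat.card {σ : Equiv.Perm E //
        IsTransition src tgt σ ∧ Equiv.Perm.SameCycle.setoid σ = a} := by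
  classical
  have : Fintype (Quotient a) := Fintype.ofFinite _
  rw [Nat.card_congr (transitionEquivPi src tgt a), Nat.card_pi, finprod_eq_prod_of_fintype]
  refine Finset.prod_congr rfl fun q _ => numEC_eq_card_isCircuitPerm src tgt ?_
  exact Quotient.exists_rep q

theorem setOf_rel_eq_setOf_mk (x : E) :
    {y | a.r x y} = {e | Quotient.mk a e = Quotient.mk a x} := by
  ext y
  rw [Set.mem_ofPred_eq, Set.mem_ofPred_eq, Quotient.eq]
  exact a.comm'

theorem eulerianPartition_iff_exists_isTransition [Fintype E] :
    EulerianPartition src tgt a ↔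
      ∃ σ : Equiv.Perm E, IsTransition src tgt σ ∧ Equiv.Perm.SameCycle.setoid σ = a := by
  classical
  constructor
  · intro h
    have hq : ∀ q : Quotient a, ∃ τ : Equiv.Perm E,
        IsCircuitPerm src tgt {e | Quotient.mk a e = q} τ := by
      intro q
      obtain ⟨x, rfl⟩ := Quotient.exists_rep q
      obtain ⟨l, hl⟩ := h x
      rw [setOf_rel_eq_setOf_mk] at hl
      exact ⟨l.formPerm, hl.isCircuitPerm_formPerm⟩
    choose τ hτ using hq
    exact ⟨_, ((transitionEquivPi src tgt a).symm fun q => ⟨τ q, hτ q⟩).2⟩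
  · rintro ⟨σ, ht, hσ⟩ x
    obtain ⟨l, hl, -⟩ := IsCircuitPerm.exists_isEulerianOn
      (A := {e | Quotient.mk a e = Quotient.mk a x}) ⟨x, rfl⟩
      (isCircuitPerm_restrictBlock ht hσ (Quotient.mk a x))
    rw [setOf_rel_eq_setOf_mk]
    exact ⟨l, hl⟩

theorem isCycleSet_iff {A : Set E} :
    IsCycleSet src tgt A ↔ IsEulerianSet src tgt A ∧ Set.InjOn src A := by
  constructor
  · rintro ⟨l, hl, hnd⟩
    exact ⟨⟨l, hl⟩, fun x hx y hy h =>
      List.inj_on_of_nodup_map hnd ((hl.2 x).2 hx) ((hl.2 y).2 hy) h⟩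
  · rintro ⟨⟨l, hl⟩, hinj⟩
    exact ⟨l, hl, hl.1.2.1.map_on fun x hx y hy h => hinj ((hl.2 x).1 hx) ((hl.2 y).1 hy) h⟩

end Blocks

section Colorings

variable {V E C : Type*} {src tgt : E → V}

theorem Equiv.Perm.SameCycle.map_eq_of_comp_eq [Finite E] {σ : Equiv.Perm E} {φ : E → C}
    (hφ : ∀ e, φ (σ e) = φ e) {x y : E} (h : σ.SameCycle x y) : φ x = φ y := by
  obtain ⟨n, rfl⟩ := h.exists_nat_pow_eq
  induction n with
  | zero => rfl
  | succ n ih =>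
    rw [pow_succ', Equiv.Perm.mul_apply, hφ]
    exact ih ⟨n, by rw [zpow_natCast]⟩

/-- Functions invariant under a permutation are the functions on its orbits. -/
def quotientFunEquivInvariant [Finite E] (σ : Equiv.Perm E) :
    (Quotient (Equiv.Perm.SameCycle.setoid σ) → C) ≃ {φ : E → C // ∀ e, φ (σ e) = φ e} where
  toFun c := ⟨fun e => c (Quotient.mk _ e), fun e => congrArg c (mk_apply_eq rfl e)⟩
  invFun φ := Quotient.lift φ.1 fun _ _ h => Equiv.Perm.SameCycle.map_eq_of_comp_eq φ.2 h
  left_inv _ := funext fun q => Quotient.inductionOn q fun _ => rfl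
  right_inv _ := rfl

theorem card_invariant [Finite E] (σ : Equiv.Perm E) (n : ℕ) :
    Nat.card {φ : E → Fin n // ∀ e, φ (σ e) = φ e} =
      n ^ Nat.card (Quotient (Equiv.Perm.SameCycle.setoid σ)) := by
  rw [← Nat.card_congr (quotientFunEquivInvariant σ), Nat.card_fun, Nat.card_fin]

theorem IsTransition.proper_iff {σ : Equiv.Perm E} (ht : IsTransition src tgt σ)
    (hinj : ∀ q : Quotient (Equiv.Perm.SameCycle.setoid σ),
      Set.InjOn src {e | Quotient.mk _ e = q})
    (c : Quotient (Equiv.Perm.SameCycle.setoid σ) → C) :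
    (∀ q₁ q₂, InterAdj src tgt _ q₁ q₂ → c q₁ ≠ c q₂) ↔
      Function.Injective fun e => (src e, c (Quotient.mk _ e)) := by
  constructor
  · intro h e f hef
    obtain ⟨h₁, h₂⟩ := Prod.ext_iff.1 hef
    by_cases hq : Quotient.mk (Equiv.Perm.SameCycle.setoid σ) e = Quotient.mk _ f
    · exact hinj _ hq rfl h₁
    · exact absurd h₂ (h _ _ ⟨hq, e, f, rfl, rfl, src e, Or.inl rfl, Or.inl h₁⟩)
  · rintro h _ _ ⟨hne, e, f, rfl, rfl, v, he, hf⟩ hc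
    have aux : ∀ e, v ∈ ({src e, tgt e} : Set V) → ∃ e', src e' = v ∧
        Quotient.mk (Equiv.Perm.SameCycle.setoid σ) e' = Quotient.mk _ e := by
      rintro e (rfl | rfl)
      · exact ⟨e, rfl, rfl⟩
      · exact ⟨σ e, ht e, mk_apply_eq rfl e⟩
    obtain ⟨e', he', hqe⟩ := aux e he
    obtain ⟨f', hf', hqf⟩ := aux f hf
    have : e' = f' := h (Prod.ext (he'.trans hf'.symm) (by dsimp only; rw [hqe, hqf, hc]))
    exact hne (by rw [← hqe, ← hqf, this])

theorem numProperColorings_eq_card_injective [Finite E] {σ : Equiv.Perm E}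
    (ht : IsTransition src tgt σ)
    (hinj : ∀ q : Quotient (Equiv.Perm.SameCycle.setoid σ),
      Set.InjOn src {e | Quotient.mk _ e = q}) (n : ℕ) :
    numProperColorings src tgt (Equiv.Perm.SameCycle.setoid σ) n =
      Nat.card {φ : E → Fin n //
        (∀ e, φ (σ e) = φ e) ∧ Function.Injective fun e => (src e, φ e)} := by
  unfold numProperColorings
  refine Nat.card_congr (((quotientFunEquivInvariant σ).subtypeEquiv
    (q := fun φ => Function.Injective fun e => (src e, φ.1 e)) fun c =>
      ht.proper_iff hinj c).trans ?_)
  exact Equiv.subtypeSubtypeEquivSubtypeInter (fun φ : E → Fin n => ∀ e, φ (σ e) = φ e)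
    fun φ => Function.Injective fun e => (src e, φ e)

theorem IsTransition.injOn_of_injective [Finite E] {σ : Equiv.Perm E} {φ : E → C}
    (hφ : ∀ e, φ (σ e) = φ e) (hinj : Function.Injective fun e => (src e, φ e))
    (q : Quotient (Equiv.Perm.SameCycle.setoid σ)) :
    Set.InjOn src {e | Quotient.mk _ e = q} := fun _ hx _ hy h =>
  hinj (Prod.ext h (Equiv.Perm.SameCycle.map_eq_of_comp_eq hφ (Quotient.exact (hx.trans hy.symm))))

theorem IsTransition.eq_of_injOn {a : Setoid E} {σ τ : Equiv.Perm E}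
    (hσ : IsTransition src tgt σ) (hτ : IsTransition src tgt τ)
    (hσa : Equiv.Perm.SameCycle.setoid σ = a) (hτa : Equiv.Perm.SameCycle.setoid τ = a)
    (hinj : ∀ q : Quotient a, Set.InjOn src {e | Quotient.mk _ e = q}) : σ = τ := by
  ext e
  exact hinj _ (mk_apply_eq hσa e) (mk_apply_eq hτa e) ((hσ e).trans (hτ e).symm)

theorem forall_isCycleSet_iff {a : Setoid E} :
    (∀ x, IsCycleSet src tgt {y | a.r x y}) ↔ EulerianPartition src tgt a ∧
      ∀ q : Quotient a, Set.InjOn src {e | Quotient.mk _ e = q} := by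
  simp only [isCycleSet_iff, forall_and, EulerianPartition, setOf_rel_eq_setOf_mk]
  exact and_congr_right fun _ => (Quotient.mk_surjective (s := a)).forall
    (p := fun q => Set.InjOn src {e | Quotient.mk a e = q}) |>.symm

end Colorings

theorem comp_swap_apply {E D : Type*} [DecidableEq E] {ψ : E → D} {x y : E} (h : ψ x = ψ y)
    (e : E) : ψ (Equiv.swap x y e) = ψ e := by
  rw [Equiv.swap_apply_def]
  split_ifs with h₁ h₂
  · rw [h₁, h]
  · rw [h₂, h]
  · rfl

section Counting

open scoped Classical

variable {V E : Type*} [Fintype E] (src tgt : E → V)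

theorem sum_transition_card_injective (a : Setoid E) (n : ℕ) :
    (∑ σ : Equiv.Perm E with IsTransition src tgt σ ∧ Equiv.Perm.SameCycle.setoid σ = a,
      Nat.card {φ : E → Fin n //
        (∀ e, φ (σ e) = φ e) ∧ Function.Injective fun e => (src e, φ e)}) =
      if ∀ x, IsCycleSet src tgt {y | a.r x y} then numProperColorings src tgt a n else 0 := by
  split_ifs with h
  · rw [forall_isCycleSet_iff, eulerianPartition_iff_exists_isTransition] at h
    obtain ⟨⟨σ, ht, rfl⟩, hinj⟩ := h
    rw [numProperColorings_eq_card_injective ht hinj]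
    refine Finset.sum_eq_single_of_mem σ (by simp [ht]) fun τ hτ hne => ?_
    simp only [Finset.mem_filter, Finset.mem_univ, true_and] at hτ
    exact absurd (hτ.1.eq_of_injOn ht hτ.2 rfl hinj) hne
  · refine Finset.sum_eq_zero fun σ hσ => ?_
    simp only [Finset.mem_filter, Finset.mem_univ, true_and] at hσ
    obtain ⟨ht, rfl⟩ := hσ
    rw [Nat.card_eq_zero]
    refine Or.inl ⟨fun φ => h ?_⟩
    rw [forall_isCycleSet_iff, eulerianPartition_iff_exists_isTransition]
    exact ⟨⟨σ, ht, rfl⟩, IsTransition.injOn_of_injective φ.2.1 φ.2.2⟩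

theorem sum_neg_one_pow_eq_zero {C : Type*} {φ : E → C}
    (hφ : ¬ Function.Injective fun e => (src e, φ e)) :
    (∑ σ : Equiv.Perm E with IsTransition src tgt σ ∧ ∀ e, φ (σ e) = φ e,
      (-1 : ℤ) ^ Nat.card (Quotient (Equiv.Perm.SameCycle.setoid σ))) = 0 := by
  simp only [Function.Injective, not_forall, Prod.ext_iff] at hφ
  obtain ⟨x, y, ⟨hs, hc⟩, hne⟩ := hφ
  simp only [Equiv.Perm.neg_one_pow_card_quotient_sameCycle]
  refine Finset.sum_involution (fun σ _ => Equiv.swap x y * σ) ?_ ?_ ?_ ?_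
  · intro σ _
    rw [Equiv.Perm.sign_mul, Equiv.Perm.sign_swap hne]
    push_cast
    ring
  · intro σ _ _ h
    exact hne (Equiv.swap_eq_one_iff.1 (mul_eq_right.1 h))
  · intro σ hσ
    simp only [Finset.mem_filter, Finset.mem_univ, true_and] at hσ ⊢
    refine ⟨fun e => ?_, fun e => ?_⟩
    · rw [Equiv.Perm.mul_apply, comp_swap_apply hs, hσ.1 e]
    · rw [Equiv.Perm.mul_apply, comp_swap_apply hc, hσ.2 e]
  · intro σ _
    exact Equiv.swap_mul_self_mul x y σ

theorem sum_neg_one_pow_mul_card_invariant (n : ℕ) :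
    (∑ σ : Equiv.Perm E with IsTransition src tgt σ,
      (-1 : ℤ) ^ Nat.card (Quotient (Equiv.Perm.SameCycle.setoid σ)) *
        Nat.card {φ : E → Fin n // ∀ e, φ (σ e) = φ e}) =
      ∑ σ : Equiv.Perm E with IsTransition src tgt σ,
        (-1 : ℤ) ^ Nat.card (Quotient (Equiv.Perm.SameCycle.setoid σ)) *
          Nat.card {φ : E → Fin n //
            (∀ e, φ (σ e) = φ e) ∧ Function.Injective fun e => (src e, φ e)} := by
  simp only [Nat.card_eq_fintype_card (α := {φ : E → Fin n // _}), Fintype.card_subtype,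
    Finset.card_filter, Nat.cast_sum, Finset.mul_sum]
  rw [Finset.sum_comm, Finset.sum_comm (t := Finset.univ)]
  refine Finset.sum_congr rfl fun φ _ => ?_
  by_cases hφ : Function.Injective fun e => (src e, φ e)
  · simp only [hφ, and_true]
  · simp only [hφ, and_false, if_false, Nat.cast_zero, mul_zero, Finset.sum_const_zero]
    rw [← sum_neg_one_pow_eq_zero src tgt hφ, Finset.sum_filter, Finset.sum_filter]
    refine Finset.sum_congr rfl fun σ _ => ?_
    by_cases h₁ : IsTransition src tgt σ <;> by_cases h₂ : ∀ e, φ (σ e) = φ e <;> simp [h₁, h₂]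

theorem finite_setoid (E : Type*) [Finite E] : Finite (Setoid E) :=
  Finite.of_injective (fun a : Setoid E => a.r) fun _ _ h =>
    Setoid.ext fun x y => iff_of_eq (congrFun (congrFun h x) y)

theorem fk_eq_card_isTransition (k : ℕ) :
    fk src tgt k = (Finset.univ.filter fun σ : Equiv.Perm E => IsTransition src tgt σ ∧
      Nat.card (Quotient (Equiv.Perm.SameCycle.setoid σ)) = k).card := by
  have := finite_setoid E
  have : Fintype (Setoid E) := Fintype.ofFinite _
  unfold fk
  rw [finsum_mem_eq_toFinset_sum,
    Finset.card_eq_sum_card_fiberwise (f := fun σ => Equiv.Perm.SameCycle.setoid σ)]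
  · refine Finset.sum_congr rfl fun a ha => ?_
    rw [finprod_numEC_eq_card_isTransition, Nat.card_eq_fintype_card, Fintype.card_subtype,
      Finset.filter_filter]
    refine congrArg _ (Finset.filter_congr fun σ _ => ?_)
    have hk := (Set.mem_toFinset.1 ha).2
    constructor
    · rintro ⟨ht, rfl⟩
      exact ⟨⟨ht, hk⟩, rfl⟩
    · rintro ⟨⟨ht, -⟩, h⟩
      exact ⟨ht, h⟩
  · intro σ hσ
    simp only [Finset.coe_filter, Finset.mem_univ, true_and, Set.mem_ofPred_eq] at hσ
    exact Set.mem_toFinset.2 ⟨eulerianPartition_iff_exists_isTransition.2 ⟨σ, hσ.1, rfl⟩, hσ.2⟩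

theorem finsum_fk_eq_sum_isTransition (x : ℤ) :
    (∑ᶠ k : ℕ, x ^ k * (fk src tgt k : ℤ)) =
      ∑ σ : Equiv.Perm E with IsTransition src tgt σ,
        x ^ Nat.card (Quotient (Equiv.Perm.SameCycle.setoid σ)) := by
  rw [finsum_eq_sum_of_support_subset (s := Finset.univ.image fun σ : Equiv.Perm E =>
      Nat.card (Quotient (Equiv.Perm.SameCycle.setoid σ))),
    ← Finset.sum_fiberwise_of_maps_to
      (g := fun σ : Equiv.Perm E => Nat.card (Quotient (Equiv.Perm.SameCycle.setoid σ)))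
      fun σ _ => Finset.mem_image.2 ⟨σ, Finset.mem_univ σ, rfl⟩]
  · refine Finset.sum_congr rfl fun k _ => ?_
    rw [fk_eq_card_isTransition, Finset.filter_filter, mul_comm, ← nsmul_eq_mul,
      ← Finset.sum_const]
    refine Finset.sum_congr rfl fun σ hσ => ?_
    rw [(Finset.mem_filter.1 hσ).2.2]
  · intro k hk
    have hfk : fk src tgt k ≠ 0 := fun h => hk (by simp [h])
    rw [fk_eq_card_isTransition, Finset.card_ne_zero] at hfk
    obtain ⟨σ, hσ⟩ := hfk
    exact Finset.mem_image.2 ⟨σ, Finset.mem_univ σ, (Finset.mem_filter.1 hσ).2.2⟩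

theorem finsum_isCycleSet_eq_sum_isTransition (n : ℕ) :
    (∑ᶠ a ∈ {a : Setoid E | ∀ x : E, IsCycleSet src tgt {y | a.r x y}},
      (-1 : ℤ) ^ Nat.card (Quotient a) * (numProperColorings src tgt a n : ℤ)) =
      ∑ σ : Equiv.Perm E with IsTransition src tgt σ,
        (-1 : ℤ) ^ Nat.card (Quotient (Equiv.Perm.SameCycle.setoid σ)) *
          Nat.card {φ : E → Fin n //
            (∀ e, φ (σ e) = φ e) ∧ Function.Injective fun e => (src e, φ e)} := by
  have := finite_setoid E
  have : Fintype (Setoid E) := Fintype.ofFinite _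
  rw [finsum_mem_eq_toFinset_sum, Set.toFinset_ofPred, Finset.sum_filter,
    ← Finset.sum_fiberwise _ fun σ : Equiv.Perm E => Equiv.Perm.SameCycle.setoid σ]
  refine Finset.sum_congr rfl fun a _ => ?_
  rw [Finset.filter_filter, ← mul_ite_zero, ← Nat.cast_zero (R := ℤ), ← Nat.cast_ite,
    ← sum_transition_card_injective, Nat.cast_sum, Finset.mul_sum]
  refine Finset.sum_congr rfl fun σ hσ => ?_
  rw [(Finset.mem_filter.1 hσ).2.2]

end Counting

/-- For a connected Eulerian digraph `D`, the circuit partition polynomial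
`r_D(t) = ∑_{k ≥ 1} t^k f_k(D)` satisfies
`r_D(−t) = ∑_{a ∈ Q(D)} (−1)^{|a|} P_{G_a}(t)`, where `Q(D)` is the set of partitions of
`E(D)` into directed cycles and `P_{G_a}` is the chromatic polynomial of the
intersection graph `G_a`. (Stated as an identity of the polynomial values at every
`n : ℕ`; equivalently, `s_D(1 − t) = −∑_{a ∈ Q(D)} (−1)^{|a|} χ_{L(a)}(t)` for the
Martin polynomial and the characteristic polynomials of the bond lattices.) -/
theorem circuit_partition_poly_eq_chromatic_sum {V E : Type*} [Fintype V] [Fintype E]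
    (src tgt : E → V) (hD : IsEulerianSet src tgt Set.univ) (n : ℕ) :
    (∑ᶠ k : ℕ, (-(n : ℤ)) ^ k * (fk src tgt k : ℤ)) =
      ∑ᶠ a ∈ {a : Setoid E | ∀ x : E, IsCycleSet src tgt {y | a.r x y}},
        (-1 : ℤ) ^ Nat.card (Quotient a) *
          (numProperColorings src tgt a n : ℤ) := by
  classical
  rw [finsum_fk_eq_sum_isTransition, finsum_isCycleSet_eq_sum_isTransition,
    ← sum_neg_one_pow_mul_card_invariant]
  refine Finset.sum_congr rfl fun σ _ => ?_
  rw [card_invariant, Nat.cast_pow, ← mul_pow, neg_one_mul]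
end
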